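/- arXiv:2108.13652 — 2 statements merged into one kernel-verified Lean document; each statement's English description precedes it below -/
import Mathlib

section
/- Let k be an algebraically closed field of characteristic 3, let g = sl_3(k) be the Lie algebra of traceless 3×3 matrices over k, let Z(g) be its center, and let L = g/Z(g) be the 7-dimensional quotient g-module with the action induced by the adjoint action. Then dim_k H^7(g, L) = 7. -/
/-! Chevalley–Eilenberg cohomology of a Lie algebra with coefficients in a module. -/

section ChevalleyEilenberg

variable (k : Type*) [Field k]
variable (g : Type*) [LieRing g] [LieAlgebra k g]
variable (M : Type*) [AddCommGroup M] [Module k M] [LieRingModule g M] [LieModule k g M]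

/-- The Chevalley–Eilenberg differential, as a raw function from alternating `n`-cochains
to `(n+1)`-ary functions:
`dψ(l₀,…,lₙ) = Σ_{i<j} (−1)^{i+j} ψ(⁅lᵢ,lⱼ⁆, …, l̂ᵢ, …, l̂ⱼ, …) + Σ_i (−1)^i ⁅lᵢ, ψ(…, l̂ᵢ, …)⁆`
(indices written from 0; this is the paper's formula with 1-based indices shifted by one). -/
def ceD : ∀ {n : ℕ}, (g [⋀^Fin n]→ₗ[k] M) → ((Fin (n + 1) → g) → M)
  | 0, ψ, v => ⁅v 0, ψ ![]⁆
  | (n + 1), ψ, v =>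
      (∑ i : Fin (n + 2), ∑ j : Fin (n + 2),
        if h : i < j then
          ((-1 : ℤ) ^ (i.val + j.val)) •
            ψ (Fin.cons ⁅v i, v j⁆
              (fun l => v (i.succAbove
                ((j.pred (Fin.pos_iff_ne_zero.mp (lt_of_le_of_lt i.zero_le h))).succAbove l))))
        else 0)
      + ∑ i : Fin (n + 2), ((-1 : ℤ) ^ i.val) • ⁅v i, ψ (fun l => v (i.succAbove l))⁆

variable {k g M}

private lemma dite_add_zero {P : Prop} [Decidable P] {N : Type*} [AddZeroClass N]
    (A B : P → N) :
    (dite P (fun h => A h + B h) fun _ => 0) =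
      (dite P A fun _ => 0) + (dite P B fun _ => 0) := by
  split_ifs <;> simp

private lemma dite_smul_zero {P : Prop} [Decidable P] {N : Type*} [AddCommGroup N] [Module k N]
    (c : k) (A : P → N) :
    (dite P (fun h => c • A h) fun _ => 0) = c • dite P A fun _ => 0 := by
  split_ifs <;> simp

lemma ceD_add {n : ℕ} (ψ φ : g [⋀^Fin n]→ₗ[k] M) (v : Fin (n + 1) → g) :
    ceD k g M (ψ + φ) v = ceD k g M ψ v + ceD k g M φ v := by
  cases n with
  | zero => simp [ceD]
  | succ n =>
    simp only [ceD, AlternatingMap.add_apply, smul_add, lie_add, dite_add_zero,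
      Finset.sum_add_distrib]
    abel

lemma ceD_smul {n : ℕ} (c : k) (ψ : g [⋀^Fin n]→ₗ[k] M) (v : Fin (n + 1) → g) :
    ceD k g M (c • ψ) v = c • ceD k g M ψ v := by
  cases n with
  | zero => simp [ceD]
  | succ n =>
    simp only [ceD, AlternatingMap.smul_apply, lie_smul, smul_comm _ c, dite_smul_zero,
      ← Finset.smul_sum, smul_add]

lemma ceD_zero {n : ℕ} (v : Fin (n + 1) → g) :
    ceD k g M (0 : g [⋀^Fin n]→ₗ[k] M) v = 0 := by
  cases n with
  | zero => simp [ceD]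
  | succ n => simp [ceD]

variable (k g M)

/-- The space of Chevalley–Eilenberg `n`-cocycles `Zⁿ(g, M)`. -/
def ceZ (n : ℕ) : Submodule k (g [⋀^Fin n]→ₗ[k] M) where
  carrier := {ψ | ∀ v, ceD k g M ψ v = 0}
  add_mem' := by
    intro ψ φ hψ hφ v
    rw [ceD_add, hψ v, hφ v, add_zero]
  zero_mem' := fun v => ceD_zero v
  smul_mem' := by
    intro c ψ hψ v
    rw [ceD_smul, hψ v, smul_zero]

/-- The space of Chevalley–Eilenberg `n`-coboundaries `Bⁿ(g, M)`: in positive degree, the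
alternating `n`-cochains that agree (as functions) with `dφ` for some `(n-1)`-cochain `φ`. -/
def ceB : (n : ℕ) → Submodule k (g [⋀^Fin n]→ₗ[k] M)
  | 0 => ⊥
  | (n + 1) =>
      { carrier := {ψ | ∃ φ : g [⋀^Fin n]→ₗ[k] M, ∀ v, ψ v = ceD k g M φ v}
        add_mem' := by
          rintro ψ χ ⟨φ₁, h₁⟩ ⟨φ₂, h₂⟩
          exact ⟨φ₁ + φ₂, fun v => by
            rw [AlternatingMap.add_apply, h₁ v, h₂ v, ceD_add]⟩
        zero_mem' := ⟨0, fun v => by rw [AlternatingMap.zero_apply, ceD_zero]⟩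
        smul_mem' := by
          rintro c ψ ⟨φ, h⟩
          exact ⟨c • φ, fun v => by rw [AlternatingMap.smul_apply, h v, ceD_smul]⟩ }

/-- The `n`-th Chevalley–Eilenberg cohomology space `Hⁿ(g, M)`: the quotient of the space of
`n`-cocycles by the space of `n`-coboundaries (viewed inside the cocycles). -/
abbrev ceH (n : ℕ) : Type _ :=
  ↥(ceZ k g M n) ⧸ (ceB k g M n).comap (ceZ k g M n).subtype

end ChevalleyEilenberg

/-- The Lie algebra `sl₃(k)` of traceless `3 × 3` matrices over `k`. -/
abbrev sl3 (k : Type*) [Field k] := ↥(LieAlgebra.SpecialLinear.sl (Fin 3) k)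

/-- The quotient `sl₃(k)/Z(sl₃(k))` of `sl₃(k)` by its center, as a module over `sl₃(k)`
via the action induced by the adjoint action. -/
abbrev sl3ModCenter (k : Type*) [Field k] := (sl3 k) ⧸ LieAlgebra.center k (sl3 k)

/-! Write `g = sl₃(k)` and `L = g/Z(g)`. Since `g` is perfect, it is unimodular, and contraction
against a volume form identifies `H⁷(g, L)` with `H₁(g, L)`. A Lie algebra acts trivially on its
homology, so only the part of `g ⊗ L` of weight zero for a diagonal coroot `h` contributes. In
characteristic `3` the three cyclic roots `ε_a - ε_{a+1}` coincide, and modulo boundaries the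
weight-zero chains are the tensors `∑ A_{ab} e_a ⊗ f_b` with `e_a = E_{a,a+1}`, `f_b = E_{b+1,b}`.
Such a tensor is a cycle exactly when `A` is traceless and a boundary exactly when `A` is scalar,
hence `H₁(g, L) ≅ L`. -/

section Tuple

variable {α : Type*} {n : ℕ}

lemma cons_fin_zero (x : α) (v : Fin 0 → α) : (Fin.cons x v : Fin 1 → α) = ![x] :=
  congrArg (Matrix.vecCons x) (Subsingleton.elim v ![])

lemma removeNth_succ_cons (x : α) (v : Fin (n + 1) → α) (i : Fin (n + 1)) :
    i.succ.removeNth (Fin.cons x v : Fin (n + 2) → α) = Fin.cons x (i.removeNth v) := by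
  ext l
  cases l using Fin.cases <;> simp [Fin.removeNth]

end Tuple

section Alternating

variable {R V M : Type*} [CommRing R] [AddCommGroup V] [Module R V] [AddCommGroup M] [Module R M]
variable {n : ℕ}

lemma map_update_eq_smul_map_cons (ψ : V [⋀^Fin (n + 1)]→ₗ[R] M) (v : Fin (n + 1) → V)
    (j : Fin (n + 1)) (y : V) :
    ψ (Function.update v j y) = (-1 : ℤ) ^ j.val • ψ (Fin.cons y (j.removeNth v)) := by
  rw [← Fin.insertNth_removeNth, ψ.map_insertNth]
  rfl

lemma map_cons_cons_swap (ψ : V [⋀^Fin (n + 2)]→ₗ[R] M) (x y : V) (v : Fin n → V) :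
    ψ (Fin.cons x (Fin.cons y v : Fin (n + 1) → V)) =
      -ψ (Fin.cons y (Fin.cons x v : Fin (n + 1) → V)) := by
  have hxy := DFunLike.congr_fun (ψ.curryLeft_same (x + y)) v
  simp only [map_add, AlternatingMap.curryLeft_add, LinearMap.add_apply,
    AlternatingMap.add_apply, AlternatingMap.curryLeft_same, zero_add, add_zero,
    AlternatingMap.zero_apply] at hxy
  exact eq_neg_of_add_eq_zero_right hxy

/-- The uncurrying of a linear map `T` into alternating maps, provided that `T x` vanishes on
tuples starting with `x`. -/
def uncurryAlternating (T : V →ₗ[R] V [⋀^Fin (n + 1)]→ₗ[R] M)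
    (hT : ∀ x v, T x (Fin.cons x v) = 0) :
    V [⋀^Fin (n + 2)]→ₗ[R] M where
  __ := (AlternatingMap.toMultilinearMapLM ∘ₗ T).uncurryLeft
  map_eq_zero_of_eq' v i j hij hne := by
    change T (v 0) (Fin.tail v) = 0
    have hhead (l : Fin (n + 1)) (hl : v 0 = v l.succ) : T (v 0) (Fin.tail v) = 0 := by
      rw [← Function.update_eq_self l (Fin.tail v), map_update_eq_smul_map_cons, Fin.tail, ← hl,
        hT, smul_zero]
    cases i using Fin.cases with
    | zero =>
      obtain ⟨j, rfl⟩ := Fin.exists_succ_eq.mpr hne.symm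
      exact hhead j hij
    | succ i =>
      cases j using Fin.cases with
      | zero => exact hhead i hij.symm
      | succ j => exact (T (v 0)).map_eq_zero_of_eq _ hij (ne_of_apply_ne Fin.succ hne)

end Alternating

section LieDerivative

variable {R g M : Type*} [CommRing R] [LieRing g] [LieAlgebra R g]
variable [AddCommGroup M] [Module R M] [LieRingModule g M] [LieModule R g M] {n : ℕ}

open AlternatingMap

/-- The Lie derivative `L_x ψ` of a cochain of positive degree: the natural action of `g` on
alternating maps `g → M`, as a linear map in `x`. -/
def lieDerivative (ψ : g [⋀^Fin (n + 1)]→ₗ[R] M) : g →ₗ[R] g [⋀^Fin (n + 1)]→ₗ[R] M where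
  toFun x := (LieModule.toEnd R g M x).compAlternatingMap ψ -
    alternatizeUncurryFin (ψ.curryLeft ∘ₗ (LieAlgebra.ad R g x : g →ₗ[R] g))
  map_add' x y := by
    ext v
    simp [alternatizeUncurryFin_apply, Finset.sum_add_distrib]
    abel
  map_smul' c x := by
    ext v
    simp [alternatizeUncurryFin_apply, smul_sub, Finset.smul_sum, smul_comm c]

lemma lieDerivative_apply (ψ : g [⋀^Fin (n + 1)]→ₗ[R] M) (x : g) (v : Fin (n + 1) → g) :
    lieDerivative ψ x v = ⁅x, ψ v⁆ - ∑ j, ψ (Function.update v j ⁅x, v j⁆) := by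
  simp only [map_update_eq_smul_map_cons]
  change ⁅x, ψ v⁆ - alternatizeUncurryFin _ v = _
  rw [alternatizeUncurryFin_apply]
  rfl

lemma lieDerivative_cons (ψ : g [⋀^Fin (n + 2)]→ₗ[R] M) (x y : g) (v : Fin (n + 1) → g) :
    lieDerivative ψ x (Fin.cons y v) =
      lieDerivative (ψ.curryLeft y) x v - ψ (Fin.cons ⁅x, y⁆ v) := by
  simp only [lieDerivative_apply, Fin.sum_univ_succ (n := n + 1), Fin.cons_zero, Fin.cons_succ,
    Fin.update_cons_zero, ← Fin.cons_update, curryLeft_apply_apply, Matrix.vecCons]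
  abel

end LieDerivative

section BracketTerm

variable {R g M : Type*} [CommRing R] [LieRing g] [LieAlgebra R g] [AddCommGroup M] [Module R M]
variable {n : ℕ}

/-- The summand of `ceD` indexed by a pair `i < j`, extended by zero to all pairs. -/
def ceBracketTerm (ψ : g [⋀^Fin (n + 1)]→ₗ[R] M) (v : Fin (n + 2) → g) (i j : Fin (n + 2)) : M :=
  if h : i < j then
    ((-1 : ℤ) ^ (i.val + j.val)) •
      ψ (Fin.cons ⁅v i, v j⁆
        ((j.pred (Fin.pos_iff_ne_zero.mp (i.zero_le.trans_lt h))).removeNth (i.removeNth v)))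
  else 0

lemma ceBracketTerm_of_le (ψ : g [⋀^Fin (n + 1)]→ₗ[R] M) (v : Fin (n + 2) → g)
    {i j : Fin (n + 2)} (h : j ≤ i) : ceBracketTerm ψ v i j = 0 :=
  dif_neg h.not_gt

lemma ceBracketTerm_cons_zero_succ (ψ : g [⋀^Fin (n + 1)]→ₗ[R] M) (x : g)
    (v : Fin (n + 1) → g) (j : Fin (n + 1)) :
    ceBracketTerm ψ (Fin.cons x v) 0 j.succ = -ψ (Function.update v j ⁅x, v j⁆) := by
  rw [ceBracketTerm, dif_pos (Fin.succ_pos j), map_update_eq_smul_map_cons, ← neg_smul]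
  simp only [Fin.val_zero, zero_add, Fin.val_succ, pow_succ, mul_neg_one, Fin.pred_succ,
    Fin.removeNth_zero, Fin.tail_cons, Fin.cons_zero, Fin.cons_succ]

lemma ceBracketTerm_cons_succ_succ (ψ : g [⋀^Fin (n + 2)]→ₗ[R] M) (x : g)
    (v : Fin (n + 2) → g) (i j : Fin (n + 2)) :
    ceBracketTerm ψ (Fin.cons x v) i.succ j.succ = -ceBracketTerm (ψ.curryLeft x) v i j := by
  obtain h | h := le_or_gt j i
  · rw [ceBracketTerm_of_le _ _ h, ceBracketTerm_of_le _ _ (Fin.succ_le_succ_iff.mpr h), neg_zero]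
  obtain ⟨j, rfl⟩ := Fin.exists_succ_eq.mpr (Fin.pos_iff_ne_zero.mp (i.zero_le.trans_lt h))
  rw [ceBracketTerm, ceBracketTerm, dif_pos h, dif_pos (Fin.succ_lt_succ_iff.mpr h)]
  have hsign : (-1 : ℤ) ^ (i.succ.val + j.succ.succ.val) = (-1) ^ (i.val + j.succ.val) := by
    simp only [Fin.val_succ]
    ring
  simp only [Fin.pred_succ, removeNth_succ_cons, hsign, Fin.cons_succ,
    map_cons_cons_swap ψ _ x, smul_neg]
  rfl

end BracketTerm

section Cartan

variable {k g M : Type*} [Field k] [LieRing g] [LieAlgebra k g]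
variable [AddCommGroup M] [Module k M] [LieRingModule g M] {n : ℕ}

lemma ceD_succ (ψ : g [⋀^Fin (n + 1)]→ₗ[k] M) (v : Fin (n + 2) → g) :
    ceD k g M ψ v = (∑ i, ∑ j, ceBracketTerm ψ v i j) +
      ∑ i : Fin (n + 2), (-1 : ℤ) ^ i.val • ⁅v i, ψ (i.removeNth v)⁆ :=
  rfl

variable [LieModule k g M]

/-- Cartan's formula `ι_x ∘ d + d ∘ ι_x = L_x`. -/
theorem ceD_cons (ψ : g [⋀^Fin (n + 1)]→ₗ[k] M) (x : g) (v : Fin (n + 1) → g) :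
    ceD k g M ψ (Fin.cons x v) = lieDerivative ψ x v - ceD k g M (ψ.curryLeft x) v := by
  rw [ceD_succ, Fin.sum_univ_succ, Fin.sum_univ_succ, lieDerivative_apply]
  simp only [Fin.sum_univ_succ (n := n + 1), ceBracketTerm_of_le, le_refl, Fin.zero_le,
    ceBracketTerm_cons_zero_succ, zero_add, Finset.sum_neg_distrib, Fin.val_zero, pow_zero,
    one_smul, Fin.cons_zero, Fin.cons_succ, Fin.removeNth_zero, Fin.tail_cons, removeNth_succ_cons,
    Fin.val_succ, pow_succ, mul_neg_one, neg_smul]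
  cases n with
  | zero =>
    simp [ceD, ceBracketTerm_of_le, cons_fin_zero]
    abel
  | succ n =>
    simp only [ceBracketTerm_cons_succ_succ, Finset.sum_neg_distrib, ceD_succ]
    simp only [AlternatingMap.curryLeft_apply_apply, Matrix.vecCons]
    abel

end Cartan

section Differential

variable {k g M : Type*} [Field k] [LieRing g] [LieAlgebra k g]
variable [AddCommGroup M] [Module k M] [LieRingModule g M] [LieModule k g M] {n : ℕ}

lemma ceD_cons_cons_self (ψ : g [⋀^Fin (n + 1)]→ₗ[k] M) (x : g) (v : Fin n → g) :
    ceD k g M ψ (Fin.cons x (Fin.cons x v : Fin (n + 1) → g)) = 0 := by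
  cases n with
  | zero =>
    rw [ceD_cons, lieDerivative_apply, cons_fin_zero]
    simp [ceD]
  | succ n =>
    rw [ceD_cons, lieDerivative_cons, ceD_cons, ψ.curryLeft_same, ceD_zero, lie_self,
      ψ.map_coord_zero 0 (Fin.cons_zero _ _)]
    abel

variable (k g M) in
lemma exists_linearMap_ceD (n : ℕ) :
    ∃ D : (g [⋀^Fin n]→ₗ[k] M) →ₗ[k] (g [⋀^Fin (n + 1)]→ₗ[k] M),
      ∀ ψ v, D ψ v = ceD k g M ψ v := by
  suffices h : ∀ ψ : g [⋀^Fin n]→ₗ[k] M, ∃ A : g [⋀^Fin (n + 1)]→ₗ[k] M,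
      ∀ v, A v = ceD k g M ψ v by
    choose A hA using h
    exact ⟨{ toFun := A
             map_add' := fun ψ φ => by ext v; simp [hA, ceD_add]
             map_smul' := fun c ψ => by ext v; simp [hA, ceD_smul] }, hA⟩
  induction n with
  | zero =>
    intro ψ
    exact ⟨AlternatingMap.ofSubsingleton k g M (0 : Fin 1)
      ((LieModule.toEnd k g M : g →ₗ[k] Module.End k M).flip (ψ ![])), fun v => rfl⟩
  | succ n ih =>
    intro ψ
    choose A hA using ih
    let T : g →ₗ[k] g [⋀^Fin (n + 1)]→ₗ[k] M := lieDerivative ψ -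
      { toFun := fun x => A (ψ.curryLeft x)
        map_add' := fun x y => by ext v; simp [hA, ceD_add]
        map_smul' := fun c x => by ext v; simp [hA, ceD_smul] }
    have hT (x : g) (v : Fin (n + 1) → g) : T x v = ceD k g M ψ (Fin.cons x v) := by
      rw [ceD_cons, ← hA]
      rfl
    refine ⟨uncurryAlternating T fun x v => by rw [hT, ceD_cons_cons_self], fun v => ?_⟩
    exact (hT _ _).trans (by rw [Fin.cons_self_tail])

variable (k g M) in
/-- The Chevalley–Eilenberg differential `Cⁿ(g, M) → Cⁿ⁺¹(g, M)`, with `ceD` as its underlying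
function. -/
noncomputable def ceDifferential (n : ℕ) :
    (g [⋀^Fin n]→ₗ[k] M) →ₗ[k] (g [⋀^Fin (n + 1)]→ₗ[k] M) :=
  (exists_linearMap_ceD k g M n).choose

lemma ceDifferential_apply (ψ : g [⋀^Fin n]→ₗ[k] M) (v : Fin (n + 1) → g) :
    ceDifferential k g M n ψ v = ceD k g M ψ v :=
  (exists_linearMap_ceD k g M n).choose_spec ψ v

lemma ceZ_eq_ker : ceZ k g M n = (ceDifferential k g M n).ker := by
  ext ψ
  simp only [LinearMap.mem_ker, AlternatingMap.ext_iff, ceDifferential_apply]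
  rfl

lemma ceB_succ_eq_range : ceB k g M (n + 1) = (ceDifferential k g M n).range := by
  ext ψ
  simp only [LinearMap.mem_range, AlternatingMap.ext_iff, ceDifferential_apply]
  exact exists_congr fun φ => forall_congr' fun v => eq_comm

lemma ceDifferential_curryLeft (ψ : g [⋀^Fin (n + 1)]→ₗ[k] M) (x : g) :
    ceDifferential k g M n (ψ.curryLeft x) =
      lieDerivative ψ x - (ceDifferential k g M (n + 1) ψ).curryLeft x := by
  ext v
  rw [ceDifferential_apply, AlternatingMap.sub_apply, AlternatingMap.curryLeft_apply_apply,
    ceDifferential_apply, Matrix.vecCons, ceD_cons, sub_sub_cancel]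

lemma lieDerivative_curryLeft (ψ : g [⋀^Fin (n + 2)]→ₗ[k] M) (x y : g) :
    lieDerivative (ψ.curryLeft y) x =
      (lieDerivative ψ x).curryLeft y + ψ.curryLeft ⁅x, y⁆ := by
  ext v
  exact (sub_eq_iff_eq_add.mp (lieDerivative_cons ψ x y v).symm)

end Differential

section Wedge

open AlternatingMap Module

variable {R V M : Type*} [CommRing R] [AddCommGroup V] [Module R V] [AddCommGroup M] [Module R M]
variable {n : ℕ}

/-- The exterior product `φ ↦ α ∧ φ` of alternating maps with a linear form. -/
def wedge (α : Dual R V) : (V [⋀^Fin n]→ₗ[R] M) →ₗ[R] V [⋀^Fin (n + 1)]→ₗ[R] M :=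
  alternatizeUncurryFinLM ∘ₗ LinearMap.smulRightₗ α

lemma wedge_curryLeft_of_zero (α : Dual R V) (φ : V [⋀^Fin 0]→ₗ[R] M) (x : V) :
    (wedge α φ).curryLeft x = α x • φ := by
  ext v
  simp [wedge, alternatizeUncurryFin_apply, Subsingleton.elim _ v]

lemma wedge_curryLeft (α : Dual R V) (φ : V [⋀^Fin (n + 1)]→ₗ[R] M) (x : V) :
    (wedge α φ).curryLeft x = α x • φ - wedge α (φ.curryLeft x) := by
  ext v
  simp [wedge, alternatizeUncurryFin_apply, Fin.sum_univ_succ (n := n + 1), pow_succ,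
    Matrix.vecCons, removeNth_succ_cons, sub_eq_add_neg]

variable {ι : Type*} [Fintype ι]

lemma sum_wedge_curryLeft (e : Basis ι R V) (φ : V [⋀^Fin (n + 1)]→ₗ[R] M) :
    ∑ i, wedge (e.coord i) (φ.curryLeft (e i)) = ((n + 1 : ℕ) : R) • φ := by
  have h : ∑ i, LinearMap.smulRightₗ (e.coord i) (φ.curryLeft (e i)) = φ.curryLeft := by
    classical
    refine e.ext fun i => ?_
    simp [Finsupp.single_apply]
  simp only [wedge, LinearMap.comp_apply, ← map_sum, h]
  rw [alternatizeUncurryFinLM_apply, alternatizeUncurryFin_curryLeft, Nat.cast_smul_eq_nsmul]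

lemma sum_curryLeft_wedge (e : Basis ι R V) (φ : V [⋀^Fin n]→ₗ[R] M) :
    ∑ i, (wedge (e.coord i) φ).curryLeft (e i) = ((Fintype.card ι : R) - n) • φ := by
  cases n with
  | zero => simp [wedge_curryLeft_of_zero, Nat.cast_smul_eq_nsmul]
  | succ n =>
    simp [wedge_curryLeft, sum_wedge_curryLeft, Nat.cast_smul_eq_nsmul, sub_smul]

lemma alternatingMap_eq_zero_of_card_lt (e : Basis ι R V) (h : Fintype.card ι < n)
    (ψ : V [⋀^Fin n]→ₗ[R] M) : ψ = 0 :=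
  e.ext_alternating fun v hv =>
    absurd (Fintype.card_le_of_injective v hv) (by simpa using h)

end Wedge

section Contraction

open AlternatingMap Module TensorProduct

variable {R V M : Type*} [CommRing R] [AddCommGroup V] [Module R V] [AddCommGroup M] [Module R M]
variable {n : ℕ}

/-- The `M`-valued volume form `vol ⊗ m`, where `vol` is the determinant in the basis `e`, as a
linear map in `m`. -/
noncomputable def volForm (e : Basis (Fin n) R V) : M →ₗ[R] V [⋀^Fin n]→ₗ[R] M where
  toFun m := (LinearMap.toSpanSingleton R M m).compAlternatingMap e.det
  map_add' m m' := by ext v; simp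
  map_smul' c m := by ext v; simp [smul_comm c]

lemma volForm_apply (e : Basis (Fin n) R V) (m : M) (v : Fin n → V) :
    volForm e m v = e.det v • m :=
  rfl

lemma volForm_apply_basis (e : Basis (Fin n) R V) (m : M) : volForm e m e = m := by
  rw [volForm_apply, e.det_self, one_smul]

lemma volForm_injective (e : Basis (Fin n) R V) :
    Function.Injective (volForm e : M →ₗ[R] V [⋀^Fin n]→ₗ[R] M) :=
  fun m m' h => by rw [← volForm_apply_basis e m, h, volForm_apply_basis]

lemma eq_of_apply_basis_eq (e : Basis (Fin n) R V) {ψ φ : V [⋀^Fin n]→ₗ[R] M}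
    (h : ψ e = φ e) : ψ = φ := by
  refine e.ext_alternating fun v hv => ?_
  obtain ⟨σ, rfl⟩ : ∃ σ : Equiv.Perm (Fin n), ⇑σ = v :=
    ⟨Equiv.ofBijective v (Finite.injective_iff_bijective.mp hv), rfl⟩
  change ψ (e ∘ σ) = φ (e ∘ σ)
  rw [ψ.map_perm, φ.map_perm, h]

lemma volForm_of_apply_basis (e : Basis (Fin n) R V) (ψ : V [⋀^Fin n]→ₗ[R] M) :
    volForm e (ψ e) = ψ :=
  eq_of_apply_basis_eq e (volForm_apply_basis e _)

lemma det_update_self (e : Basis (Fin n) R V) (j : Fin n) (x : V) :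
    e.det (Function.update e j x) = e.repr x j := by
  rw [e.det_apply, e.toMatrix_update, e.toMatrix_self, ← Matrix.cramer_apply, Matrix.cramer_one]
  rfl

/-- The contraction `x ⊗ m ↦ ι_x (vol ⊗ m)`. -/
noncomputable def contractVol (e : Basis (Fin (n + 1)) R V) :
    V ⊗[R] M →ₗ[R] V [⋀^Fin n]→ₗ[R] M :=
  TensorProduct.lift (curryLeftLinearMap ∘ₗ volForm e).flip

lemma contractVol_tmul (e : Basis (Fin (n + 1)) R V) (x : V) (m : M) :
    contractVol e (x ⊗ₜ m) = (volForm e m).curryLeft x :=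
  rfl

lemma wedge_curryLeft_volForm_apply_basis (e : Basis (Fin (n + 1)) R V) (α : Dual R V)
    (x : V) (m : M) :
    wedge α ((volForm e m).curryLeft x) e = α x • m := by
  have hzero : (wedge α (volForm e m)).curryLeft x = 0 := by
    rw [alternatingMap_eq_zero_of_card_lt e (by simp) (wedge α (volForm e m)), curryLeft_zero,
      LinearMap.zero_apply]
  rw [wedge_curryLeft, sub_eq_zero] at hzero
  rw [← hzero, AlternatingMap.smul_apply, volForm_apply_basis]

/-- The inverse of `contractVol`: it sends `φ` to `∑ eᵢ ⊗ mᵢ`, where `vol ⊗ mᵢ = eⁱ ∧ φ`. -/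
noncomputable def uncontractVol (e : Basis (Fin (n + 1)) R V) :
    (V [⋀^Fin n]→ₗ[R] M) →ₗ[R] V ⊗[R] M where
  toFun φ := ∑ i, e i ⊗ₜ wedge (e.coord i) φ e
  map_add' φ χ := by simp [tmul_add, Finset.sum_add_distrib]
  map_smul' c φ := by simp [Finset.smul_sum]

lemma contractVol_uncontractVol (e : Basis (Fin (n + 1)) R V) (φ : V [⋀^Fin n]→ₗ[R] M) :
    contractVol e (uncontractVol e φ) = φ := by
  simp [uncontractVol, contractVol_tmul, volForm_of_apply_basis, sum_curryLeft_wedge]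

lemma uncontractVol_contractVol_tmul (e : Basis (Fin (n + 1)) R V) (x : V) (m : M) :
    uncontractVol e (contractVol e (x ⊗ₜ m)) = x ⊗ₜ m := by
  simp only [uncontractVol, contractVol_tmul, LinearMap.coe_mk, AddHom.coe_mk,
    wedge_curryLeft_volForm_apply_basis, ← smul_tmul, ← sum_tmul, e.coord_apply, e.sum_repr]

/-- Contraction against the volume form identifies `V ⊗ M` with the alternating maps of degree
one below the top. -/
noncomputable def contractVolEquiv (e : Basis (Fin (n + 1)) R V) :
    V ⊗[R] M ≃ₗ[R] V [⋀^Fin n]→ₗ[R] M :=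
  LinearEquiv.ofLinearMap (contractVol e) (uncontractVol e)
    (LinearMap.ext (contractVol_uncontractVol e))
    (TensorProduct.ext' (uncontractVol_contractVol_tmul e))

lemma span_range_curryLeft_curryLeft_volForm (h2 : IsUnit (2 : R)) (e : Basis (Fin (n + 2)) R V) :
    Submodule.span R (Set.range fun p : V × V × M =>
      ((volForm e p.2.2).curryLeft p.1).curryLeft p.2.1) = ⊤ := by
  rw [eq_top_iff]
  intro φ _
  have hφ : (2 : R) • φ = ∑ i, (wedge (e.coord i) φ).curryLeft (e i) := by
    rw [sum_curryLeft_wedge]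
    simp
  rw [← Submodule.smul_mem_iff_of_isUnit _ h2, hφ]
  refine Submodule.sum_mem _ fun i _ => ?_
  rw [← contractVol_uncontractVol e (wedge (e.coord i) φ)]
  induction uncontractVol e (wedge (e.coord i) φ) with
  | zero => simp
  | tmul x m => exact Submodule.subset_span ⟨(x, e i, m), rfl⟩
  | add s t hs ht =>
    rw [map_add, curryLeft_add]
    exact Submodule.add_mem _ hs ht

end Contraction

section HomologyOne

open TensorProduct

variable {R g M : Type*} [CommRing R] [LieRing g] [LieAlgebra R g]
variable [AddCommGroup M] [Module R M] [LieRingModule g M]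

/-- The boundary in the Chevalley–Eilenberg chain complex of `x ∧ y ⊗ m`. -/
def ceBoundary (x y : g) (m : M) : g ⊗[R] M :=
  x ⊗ₜ ⁅y, m⁆ - y ⊗ₜ ⁅x, m⁆ - ⁅x, y⁆ ⊗ₜ m

variable (R g M) in
/-- The space of `1`-boundaries of the Chevalley–Eilenberg chain complex. -/
def ceOneBoundaries : Submodule R (g ⊗[R] M) :=
  Submodule.span R (Set.range fun p : g × g × M => ceBoundary p.1 p.2.1 p.2.2)

lemma ceBoundary_mem_ceOneBoundaries (x y : g) (m : M) :
    ceBoundary x y m ∈ ceOneBoundaries R g M :=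
  Submodule.subset_span ⟨(x, y, m), rfl⟩

variable [LieModule R g M]

variable (R g M) in
/-- The space of `1`-cycles of the Chevalley–Eilenberg chain complex, the differential in degree
one being `x ⊗ m ↦ ⁅x, m⁆`. -/
def ceOneCycles : Submodule R (g ⊗[R] M) :=
  (LieModule.toModuleHom R g M : g ⊗[R] M →ₗ[R] M).ker

variable (R g M) in
/-- The first Chevalley–Eilenberg homology space `H₁(g, M)`. -/
abbrev ceHomologyOne : Type _ :=
  ceOneCycles R g M ⧸ (ceOneBoundaries R g M).comap (ceOneCycles R g M).subtype

variable (R g M) in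
lemma ceOneBoundaries_le_ceOneCycles : ceOneBoundaries R g M ≤ ceOneCycles R g M := by
  refine Submodule.span_le.mpr ?_
  rintro _ ⟨⟨x, y, m⟩, rfl⟩
  simp [ceOneCycles, ceBoundary]

lemma lie_sub_tmul_toModuleHom_mem_ceOneBoundaries (x : g) (t : g ⊗[R] M) :
    ⁅x, t⁆ - x ⊗ₜ LieModule.toModuleHom R g M t ∈ ceOneBoundaries R g M := by
  induction t with
  | zero => simp
  | tmul y m =>
    have hxy : ⁅x, y ⊗ₜ[R] m⁆ - x ⊗ₜ LieModule.toModuleHom R g M (y ⊗ₜ m) =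
        -ceBoundary x y m := by
      rw [LieModule.toModuleHom_apply, LieModule.lie_tmul_right, ceBoundary]
      abel
    exact hxy ▸ neg_mem (ceBoundary_mem_ceOneBoundaries x y m)
  | add s t hs ht =>
    rw [lie_add, map_add, tmul_add, add_sub_add_comm]
    exact add_mem hs ht

lemma lie_mem_ceOneBoundaries (x : g) {t : g ⊗[R] M} (ht : t ∈ ceOneCycles R g M) :
    ⁅x, t⁆ ∈ ceOneBoundaries R g M := by
  have hdt : LieModule.toModuleHom R g M t = 0 := ht
  simpa [hdt] using lie_sub_tmul_toModuleHom_mem_ceOneBoundaries x t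

end HomologyOne

section Unimodular

open Module

variable {R g M : Type*} [CommRing R] [LieRing g] [LieAlgebra R g]
variable [AddCommGroup M] [Module R M] [LieRingModule g M] [LieModule R g M] {n : ℕ}

lemma lieDerivative_volForm (htr : ∀ x : g, LinearMap.trace R g (LieAlgebra.ad R g x) = 0)
    (e : Basis (Fin (n + 1)) R g) (m : M) (x : g) :
    lieDerivative (volForm e m) x = volForm e ⁅x, m⁆ := by
  refine eq_of_apply_basis_eq e ?_
  have htr_sum : ∑ j, e.repr ⁅x, e j⁆ j = 0 := by
    rw [← htr x, LinearMap.trace_eq_matrix_trace R e]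
    simp [Matrix.trace, LinearMap.toMatrix_apply]
  simp only [lieDerivative_apply, volForm_apply, det_update_self, ← Finset.sum_smul, htr_sum,
    e.det_self, zero_smul, one_smul, sub_zero]

end Unimodular

section PoincareDuality

open Module TensorProduct

variable {k g : Type*} [Field k] [LieRing g] [LieAlgebra k g]
variable {M : Type*} [AddCommGroup M] [Module k M] [LieRingModule g M] [LieModule k g M]
variable {n : ℕ}

lemma ceDifferential_volForm (e : Basis (Fin n) k g) (m : M) :
    ceDifferential k g M n (volForm e m) = 0 :=
  alternatingMap_eq_zero_of_card_lt e (by simp) _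

lemma ceDifferential_contractVol
    (htr : ∀ x : g, LinearMap.trace k g (LieAlgebra.ad k g x) = 0)
    (e : Basis (Fin (n + 1)) k g) (t : g ⊗[k] M) :
    ceDifferential k g M n (contractVol e t) = volForm e (LieModule.toModuleHom k g M t) := by
  induction t with
  | zero => simp
  | tmul x m =>
    rw [contractVol_tmul, ceDifferential_curryLeft, ceDifferential_volForm,
      lieDerivative_volForm htr, AlternatingMap.curryLeft_zero, LinearMap.zero_apply, sub_zero,
      LieModule.toModuleHom_apply]
  | add s t hs ht => simp [hs, ht]

lemma ceDifferential_curryLeft_curryLeft_volForm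
    (htr : ∀ x : g, LinearMap.trace k g (LieAlgebra.ad k g x) = 0)
    (e : Basis (Fin (n + 2)) k g) (x y : g) (m : M) :
    ceDifferential k g M n (((volForm e m).curryLeft x).curryLeft y) =
      contractVol e (ceBoundary x y m) := by
  have hx := ceDifferential_contractVol htr e (x ⊗ₜ[k] m)
  rw [contractVol_tmul, LieModule.toModuleHom_apply] at hx
  rw [ceDifferential_curryLeft, lieDerivative_curryLeft, lieDerivative_volForm htr, hx,
    ceBoundary, ← lie_skew x y]
  simp only [map_sub, map_neg, neg_tmul, contractVol_tmul]
  abel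

lemma map_contractVolEquiv_ceOneCycles
    (htr : ∀ x : g, LinearMap.trace k g (LieAlgebra.ad k g x) = 0)
    (e : Basis (Fin (n + 1)) k g) :
    (ceOneCycles k g M).map (contractVolEquiv e).toLinearMap =
      ceZ k g M n := by
  refine (Submodule.map_equiv_eq_comap_symm _ _).trans ?_
  ext φ
  obtain ⟨t, rfl⟩ := (contractVolEquiv (M := M) e).surjective φ
  have ht : ceDifferential k g M n (contractVolEquiv e t) =
      volForm e (LieModule.toModuleHom k g M t) := ceDifferential_contractVol htr e t
  simp [ceZ_eq_ker, ceOneCycles, ht, map_eq_zero_iff _ (volForm_injective e)]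

lemma map_contractVolEquiv_ceOneBoundaries
    (htr : ∀ x : g, LinearMap.trace k g (LieAlgebra.ad k g x) = 0) (h2 : (2 : k) ≠ 0)
    (e : Basis (Fin (n + 2)) k g) :
    (ceOneBoundaries k g M).map (contractVolEquiv e).toLinearMap =
      ceB k g M (n + 1) := by
  rw [ceB_succ_eq_range, LinearMap.range_eq_map,
    ← span_range_curryLeft_curryLeft_volForm h2.isUnit e, Submodule.map_span, ← Set.range_comp,
    ceOneBoundaries, Submodule.map_span, ← Set.range_comp]
  congr 2
  ext1 p
  exact (ceDifferential_curryLeft_curryLeft_volForm htr e _ _ _).symm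

/-- Poincaré duality one degree below the top for a unimodular Lie algebra. -/
noncomputable def ceHEquivHomologyOne
    (htr : ∀ x : g, LinearMap.trace k g (LieAlgebra.ad k g x) = 0) (h2 : (2 : k) ≠ 0)
    (e : Basis (Fin (n + 2)) k g) :
    ceHomologyOne k g M ≃ₗ[k] ceH k g M (n + 1) :=
  Submodule.Quotient.equiv _ _
    ((contractVolEquiv e).ofSubmodules _ _ (map_contractVolEquiv_ceOneCycles htr e)) (by
      rw [← map_contractVolEquiv_ceOneBoundaries htr h2 e]
      ext ⟨φ, hφ⟩
      simp)

end PoincareDuality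

section SpecialLinear

open LieAlgebra LieAlgebra.SpecialLinear Module

section CommRing

variable {n R : Type*} [Fintype n] [DecidableEq n] [CommRing R]

lemma lie_single_eq_zero_iff_commute {i j : n} (hij : i ≠ j) (A : sl n R) :
    ⁅SpecialLinear.single i j hij (1 : R), A⁆ = 0 ↔ Commute (Matrix.single i j 1) A.1 := by
  rw [← Subtype.coe_inj, sl_bracket, val_single]
  exact sub_eq_zero

lemma mem_center_sl_iff {A : sl n R} :
    A ∈ center R (sl n R) ↔ A.1 ∈ Submodule.span R {(1 : Matrix n n R)} := by
  rw [LieModule.mem_maxTrivSubmodule, Submodule.mem_span_singleton]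
  constructor
  · intro hA
    obtain ⟨c, hc⟩ := Matrix.mem_range_scalar_of_commute_single fun i j hij =>
      (lie_single_eq_zero_iff_commute hij A).mp (hA _)
    exact ⟨c, by rw [← hc, Matrix.scalar_apply, Matrix.smul_one_eq_diagonal]⟩
  · rintro ⟨c, hc⟩ B
    rw [← Subtype.coe_inj, sl_bracket, ← hc]
    simp

end CommRing

variable (k n : Type*) [Field k] [Fintype n] [DecidableEq n] [Nonempty n]

lemma finrank_sl : finrank k (sl n k) + 1 = Fintype.card n ^ 2 := by
  have hrange : (Matrix.traceLinearMap n k k).range = ⊤ :=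
    LinearMap.range_eq_top.mpr (Matrix.trace_surjective)
  have h := (Matrix.traceLinearMap n k k).finrank_range_add_finrank_ker
  rw [hrange, finrank_top, finrank_self, finrank_matrix, finrank_self, mul_one, ← sq] at h
  rw [← h, add_comm]
  rfl

variable {k n} in
lemma finrank_center_sl (hn : (Fintype.card n : k) = 0) : finrank k (center k (sl n k)) = 1 := by
  let one : sl n k := ⟨1, by simpa [sl] using hn⟩
  have hcenter : (center k (sl n k)).toSubmodule = Submodule.span k {one} := by
    ext A
    rw [LieSubmodule.mem_toSubmodule, mem_center_sl_iff, Submodule.mem_span_singleton,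
      Submodule.mem_span_singleton]
    exact exists_congr fun c => (Subtype.ext_iff (a1 := c • one) (a2 := A)).symm
  have hone : one ≠ 0 := by
    rw [ne_eq, ← Subtype.coe_inj]
    exact one_ne_zero
  change finrank k (center k (sl n k)).toSubmodule = 1
  rw [hcenter, finrank_span_singleton hone]

end SpecialLinear

section MatrixUnits

variable {n R : Type*} [Fintype n] [DecidableEq n] [CommRing R]

lemma diagonal_mul_single_sub_single_mul_diagonal (d : n → R) (i j : n) :
    Matrix.diagonal d * Matrix.single i j 1 - Matrix.single i j 1 * Matrix.diagonal d =
      (d i - d j) • Matrix.single i j (1 : R) := by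
  ext a b
  simp only [Matrix.sub_apply, Matrix.diagonal_mul, Matrix.mul_diagonal, Matrix.smul_apply,
    Matrix.single_apply, smul_eq_mul]
  split_ifs with hab
  · rw [hab.1, hab.2, mul_one, mul_one, one_mul]
  · simp

end MatrixUnits

namespace sl3

open LieAlgebra Module TensorProduct

variable {k : Type*} [Field k]

lemma succ_ne_self (i : Fin 3) : i + 1 ≠ i := by
  decide +revert

variable (k) in
/-- The elementary matrix `E_{i,i+1}`, with indices modulo `3`. -/
def e (i : Fin 3) : sl3 k :=
  SpecialLinear.single i (i + 1) (succ_ne_self i).symm 1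

variable (k) in
/-- The elementary matrix `E_{i+1,i}`, with indices modulo `3`. -/
def f (i : Fin 3) : sl3 k :=
  SpecialLinear.single (i + 1) i (succ_ne_self i) 1

variable (k) in
/-- The coroot `E_{i,i} - E_{i+1,i+1}`. -/
def h (i : Fin 3) : sl3 k :=
  ⁅e k i, f k i⁆

lemma val_e (i : Fin 3) : (e k i).1 = Matrix.single i (i + 1) 1 := rfl

lemma val_f (i : Fin 3) : (f k i).1 = Matrix.single (i + 1) i 1 := rfl

lemma val_h (i : Fin 3) :
    (h k i).1 = Matrix.diagonal (Pi.single i 1 - Pi.single (i + 1) 1) := by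
  rw [h, SpecialLinear.sl_bracket, val_e, val_f, Matrix.single_mul_single_same,
    Matrix.single_mul_single_same, one_mul, ← Matrix.diagonal_single, ← Matrix.diagonal_single]
  exact Matrix.diagonal_sub _ _

lemma lie_e_e_succ (i : Fin 3) : ⁅e k i, e k (i + 1)⁆ = f k (i + 2) := by
  rw [← Subtype.coe_inj, SpecialLinear.sl_bracket, val_e, val_e, val_f]
  fin_cases i <;> simp

lemma lie_f_f_succ (i : Fin 3) : ⁅f k i, f k (i + 1)⁆ = -e k (i + 2) := by
  rw [← Subtype.coe_inj, SpecialLinear.sl_bracket, NegMemClass.coe_neg, val_e, val_f, val_f]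
  fin_cases i <;> simp

lemma lie_e_f_of_ne {i j : Fin 3} (hij : i ≠ j) : ⁅e k i, f k j⁆ = 0 := by
  have hij_succ : i + 1 ≠ j + 1 := by simpa
  rw [← Subtype.coe_inj, SpecialLinear.sl_bracket, val_e, val_f]
  simp [hij.symm, hij_succ]

lemma lie_h_h (i j : Fin 3) : ⁅h k i, h k j⁆ = 0 := by
  rw [← Subtype.coe_inj, SpecialLinear.sl_bracket, val_h, val_h]
  exact sub_eq_zero.mpr (Matrix.commute_diagonal _ _)

section CharThree

variable [CharP k 3]

/-- The entries `2` and `-1` of the cyclic Cartan matrix agree modulo `3`. -/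
lemma coroot_apply_sub_apply_succ (i j : Fin 3) :
    (Pi.single i 1 - Pi.single (i + 1) 1 : Fin 3 → k) j -
      (Pi.single i 1 - Pi.single (i + 1) 1 : Fin 3 → k) (j + 1) = -1 := by
  have h3 := CharP.ofNat_eq_zero k 3
  fin_cases i <;> fin_cases j <;> simp <;> linear_combination h3

lemma lie_h_e (i j : Fin 3) : ⁅h k i, e k j⁆ = -e k j := by
  rw [← Subtype.coe_inj, SpecialLinear.sl_bracket, NegMemClass.coe_neg, val_h, val_e,
    diagonal_mul_single_sub_single_mul_diagonal, coroot_apply_sub_apply_succ, neg_one_smul]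

lemma lie_h_f (i j : Fin 3) : ⁅h k i, f k j⁆ = f k j := by
  rw [← Subtype.coe_inj, SpecialLinear.sl_bracket, val_h, val_f,
    diagonal_mul_single_sub_single_mul_diagonal, ← neg_sub, coroot_apply_sub_apply_succ, neg_neg,
    one_smul]

end CharThree

variable (k) in
/-- The generators `e i`, `f i`, `h i` of `sl₃(k)`. -/
def generators : Set (sl3 k) :=
  Set.range (e k) ∪ Set.range (f k) ∪ Set.range (h k)

lemma eq_sum_generators (A : sl3 k) :
    A = ∑ i, A.1 i (i + 1) • e k i + ∑ i, A.1 (i + 1) i • f k i + A.1 0 0 • h k 0 -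
      A.1 2 2 • h k 1 := by
  have htr : A.1 0 0 + A.1 1 1 + A.1 2 2 = 0 := by
    rw [← Matrix.trace_fin_three]
    exact A.2
  refine Subtype.ext (Matrix.ext fun a b => ?_)
  push_cast
  fin_cases a <;> fin_cases b <;> simp [Fin.sum_univ_three, val_h, val_e, val_f]
  linear_combination htr

lemma span_generators : Submodule.span k (generators k) = ⊤ := by
  refine Submodule.eq_top_iff'.mpr fun A => ?_
  have he (i) : e k i ∈ Submodule.span k (generators k) :=
    Submodule.subset_span (.inl (.inl ⟨i, rfl⟩))
  have hf (i) : f k i ∈ Submodule.span k (generators k) :=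
    Submodule.subset_span (.inl (.inr ⟨i, rfl⟩))
  have hh (i) : h k i ∈ Submodule.span k (generators k) :=
    Submodule.subset_span (.inr ⟨i, rfl⟩)
  rw [eq_sum_generators A]
  exact sub_mem (add_mem (add_mem (sum_mem fun i _ => Submodule.smul_mem _ _ (he i))
    (sum_mem fun i _ => Submodule.smul_mem _ _ (hf i))) (Submodule.smul_mem _ _ (hh 0)))
    (Submodule.smul_mem _ _ (hh 1))

variable (k) in
lemma lowerCentralSeries_one_eq_top : LieModule.lowerCentralSeries k (sl3 k) (sl3 k) 1 = ⊤ := by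
  have hlie (x y : sl3 k) : ⁅x, y⁆ ∈ LieModule.lowerCentralSeries k (sl3 k) (sl3 k) 1 :=
    LieSubmodule.lie_mem_lie trivial trivial
  have hgen : generators k ⊆ LieModule.lowerCentralSeries k (sl3 k) (sl3 k) 1 := by
    rintro _ ((⟨i, rfl⟩ | ⟨i, rfl⟩) | ⟨i, rfl⟩)
    · rw [← neg_neg (e k i), show i = i + 1 + 2 by decide +revert, ← lie_f_f_succ]
      exact neg_mem (hlie _ _)
    · rw [show i = i + 1 + 2 by decide +revert, ← lie_e_e_succ]
      exact hlie _ _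
    · exact hlie (e k i) (f k i)
  rw [← LieSubmodule.toSubmodule_eq_top, eq_top_iff, ← span_generators]
  exact Submodule.span_le.mpr hgen

lemma trace_ad (x : sl3 k) : LinearMap.trace k (sl3 k) (ad k (sl3 k) x) = 0 :=
  LieModule.trace_toEnd_eq_zero_of_mem_lcs k (sl3 k) (sl3 k) le_rfl
    (lowerCentralSeries_one_eq_top k ▸ LieSubmodule.mem_top x)

section CyclicTensor

variable (k) in
/-- The projection of `sl₃(k)` onto its quotient by the center. -/
def proj : sl3 k →ₗ⁅k, sl3 k⁆ sl3ModCenter k :=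
  LieSubmodule.Quotient.mk' (center k (sl3 k))

lemma proj_eq_zero_iff {x : sl3 k} : proj k x = 0 ↔ x ∈ center k (sl3 k) :=
  LieSubmodule.Quotient.mk_eq_zero'

lemma proj_surjective : Function.Surjective (proj k) :=
  LieSubmodule.Quotient.surjective_mk' _

lemma ceBoundary_proj (x y z : sl3 k) :
    ceBoundary x y (proj k z) =
      x ⊗ₜ[k] proj k ⁅y, z⁆ - y ⊗ₜ[k] proj k ⁅x, z⁆ - ⁅x, y⁆ ⊗ₜ[k] proj k z := by
  rw [ceBoundary, LieModuleHom.map_lie, LieModuleHom.map_lie]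

variable (k) in
/-- The tensor `∑ A_{ab} e_a ⊗ f_b` attached to a matrix `A`. -/
def cyclicTensor : Matrix (Fin 3) (Fin 3) k →ₗ[k] sl3 k ⊗[k] sl3ModCenter k :=
  ∑ a, ∑ b, (LinearMap.toSpanSingleton k _ (e k a ⊗ₜ proj k (f k b))).comp
    (Matrix.entryLinearMap k k a b)

lemma cyclicTensor_apply (A : Matrix (Fin 3) (Fin 3) k) :
    cyclicTensor k A = ∑ a, ∑ b, A a b • e k a ⊗ₜ[k] proj k (f k b) := by
  simp [cyclicTensor]

lemma cyclicTensor_single (a b : Fin 3) :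
    cyclicTensor k (Matrix.single a b 1) = e k a ⊗ₜ proj k (f k b) := by
  simp [cyclicTensor_apply, Matrix.single_apply, ite_and]

lemma ceBoundary_e_e_e (i : Fin 3) :
    ceBoundary (e k (i + 1)) (e k (i + 2)) (proj k (e k i)) =
      e k (i + 1) ⊗ₜ proj k (f k (i + 1)) + e k (i + 2) ⊗ₜ proj k (f k (i + 2)) -
        f k i ⊗ₜ[k] proj k (e k i) := by
  have h12 : ⁅e k (i + 1), e k (i + 2)⁆ = f k i := by
    simpa [add_assoc] using lie_e_e_succ (k := k) (i + 1)
  have h20 : ⁅e k (i + 2), e k i⁆ = f k (i + 1) := by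
    simpa [add_assoc] using lie_e_e_succ (k := k) (i + 2)
  rw [ceBoundary_proj, h12, h20, ← lie_skew, lie_e_e_succ, map_neg, tmul_neg, sub_neg_eq_add]

lemma ceBoundary_f_f_f (i : Fin 3) :
    ceBoundary (f k (i + 1)) (f k (i + 2)) (proj k (f k i)) =
      e k i ⊗ₜ[k] proj k (f k i) - f k (i + 1) ⊗ₜ proj k (e k (i + 1)) -
        f k (i + 2) ⊗ₜ proj k (e k (i + 2)) := by
  have h12 : ⁅f k (i + 1), f k (i + 2)⁆ = -e k i := by
    simpa [add_assoc] using lie_f_f_succ (k := k) (i + 1)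
  have h20 : ⁅f k (i + 2), f k i⁆ = -e k (i + 1) := by
    simpa [add_assoc] using lie_f_f_succ (k := k) (i + 2)
  rw [ceBoundary_proj, h12, h20, ← lie_skew, lie_f_f_succ, neg_neg, map_neg, tmul_neg, neg_tmul]
  abel

lemma cyclicTensor_one_mem_ceOneBoundaries :
    cyclicTensor k 1 ∈ ceOneBoundaries k (sl3 k) (sl3ModCenter k) := by
  have key : cyclicTensor k 1 = ceBoundary (e k (1 + 1)) (e k (1 + 2)) (proj k (e k 1)) +
      ceBoundary (e k (2 + 1)) (e k (2 + 2)) (proj k (e k 2)) -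
        ceBoundary (f k (0 + 1)) (f k (0 + 2)) (proj k (f k 0)) := by
    rw [ceBoundary_e_e_e, ceBoundary_e_e_e, ceBoundary_f_f_f, cyclicTensor_apply]
    simp [Fin.sum_univ_three, Matrix.one_apply]
    abel
  rw [key]
  exact sub_mem (add_mem (ceBoundary_mem_ceOneBoundaries _ _ _)
    (ceBoundary_mem_ceOneBoundaries _ _ _)) (ceBoundary_mem_ceOneBoundaries _ _ _)

variable (k) in
/-- The subspace of the `1`-chains congruent to a tensor `∑ A_{ab} e_a ⊗ f_b` modulo boundaries. -/
def cyclicChains : Submodule k (sl3 k ⊗[k] sl3ModCenter k) :=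
  (cyclicTensor k).range ⊔ ceOneBoundaries k (sl3 k) (sl3ModCenter k)

lemma e_tmul_f_mem_cyclicChains (a b : Fin 3) : e k a ⊗ₜ proj k (f k b) ∈ cyclicChains k :=
  Submodule.mem_sup_left ⟨_, cyclicTensor_single a b⟩

lemma ceBoundary_mem_cyclicChains (x y : sl3 k) (m : sl3ModCenter k) :
    ceBoundary x y m ∈ cyclicChains k :=
  Submodule.mem_sup_right (ceBoundary_mem_ceOneBoundaries x y m)

lemma lie_tmul_proj_mem_cyclicChains {x y z : sl3 k}
    (hxy : x ⊗ₜ proj k ⁅y, z⁆ ∈ cyclicChains k) (hyx : y ⊗ₜ proj k ⁅x, z⁆ ∈ cyclicChains k) :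
    ⁅x, y⁆ ⊗ₜ proj k z ∈ cyclicChains k := by
  have key : ⁅x, y⁆ ⊗ₜ proj k z =
      x ⊗ₜ[k] proj k ⁅y, z⁆ - y ⊗ₜ[k] proj k ⁅x, z⁆ - ceBoundary x y (proj k z) := by
    rw [ceBoundary_proj, sub_sub_cancel]
  rw [key]
  exact sub_mem (sub_mem hxy hyx) (ceBoundary_mem_cyclicChains _ _ _)

lemma e_tmul_lie_e_e_mem_cyclicChains (a b c : Fin 3) :
    e k a ⊗ₜ proj k ⁅e k b, e k c⁆ ∈ cyclicChains k := by
  obtain rfl | rfl | rfl : b = c ∨ b + 1 = c ∨ c + 1 = b := by decide +revert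
  · simp
  · rw [lie_e_e_succ]
    exact e_tmul_f_mem_cyclicChains a _
  · rw [← lie_skew, lie_e_e_succ, map_neg, tmul_neg]
    exact neg_mem (e_tmul_f_mem_cyclicChains a _)

lemma f_tmul_e_mem_cyclicChains (a b : Fin 3) : f k a ⊗ₜ proj k (e k b) ∈ cyclicChains k := by
  rw [show a = a + 1 + 2 by decide +revert, ← lie_e_e_succ]
  exact lie_tmul_proj_mem_cyclicChains (e_tmul_lie_e_e_mem_cyclicChains _ _ _)
    (e_tmul_lie_e_e_mem_cyclicChains _ _ _)

variable [CharP k 3]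

lemma h_tmul_h_mem_cyclicChains (a b : Fin 3) : h k a ⊗ₜ proj k (h k b) ∈ cyclicChains k := by
  refine lie_tmul_proj_mem_cyclicChains ?_ ?_
  · rw [← lie_skew, lie_h_f, map_neg, tmul_neg]
    exact neg_mem (e_tmul_f_mem_cyclicChains a a)
  · rw [← lie_skew, lie_h_e, neg_neg]
    exact f_tmul_e_mem_cyclicChains a a

/-- The element `h 0` multiplies a tensor of two generators by `0` or `±1`, and by `0` only in the
cases `e ⊗ f`, `f ⊗ e` and `h ⊗ h`. -/
lemma sub_lie_lie_tmul_mem_cyclicChains {x y : sl3 k} (hx : x ∈ generators k)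
    (hy : y ∈ generators k) :
    x ⊗ₜ proj k y - ⁅h k 0, ⁅h k 0, x ⊗ₜ[k] proj k y⁆⁆ ∈ cyclicChains k := by
  have sub_four_smul (t : sl3 k ⊗[k] sl3ModCenter k) : t - (t + t + (t + t)) = 0 := by
    rw [show t - (t + t + (t + t)) = -((3 : k) • t) by module, CharP.ofNat_eq_zero k 3,
      zero_smul, neg_zero]
  obtain ((⟨i, rfl⟩ | ⟨i, rfl⟩) | ⟨i, rfl⟩) := hx <;>
  obtain ((⟨j, rfl⟩ | ⟨j, rfl⟩) | ⟨j, rfl⟩) := hy <;>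
  simp [TensorProduct.LieModule.lie_tmul_right, ← LieModuleHom.map_lie, lie_h_e, lie_h_f, lie_h_h,
    tmul_neg, neg_tmul, e_tmul_f_mem_cyclicChains, f_tmul_e_mem_cyclicChains,
    h_tmul_h_mem_cyclicChains, sub_four_smul]

lemma sub_lie_lie_mem_cyclicChains (t : sl3 k ⊗[k] sl3ModCenter k) :
    t - ⁅h k 0, ⁅h k 0, t⁆⁆ ∈ cyclicChains k := by
  let ad0 := LieModule.toEnd k (sl3 k) (sl3 k ⊗[k] sl3ModCenter k) (h k 0)
  have hspan : Submodule.span k (proj k '' generators k) = ⊤ := by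
    rw [← LieModuleHom.coe_toLinearMap, ← Submodule.map_span, span_generators,
      Submodule.map_top, LinearMap.range_eq_top]
    exact proj_surjective
  suffices (cyclicChains k).comap (LinearMap.id - ad0 ∘ₗ ad0) = ⊤ from
    (this ▸ Submodule.mem_top : t ∈ (cyclicChains k).comap (LinearMap.id - ad0 ∘ₗ ad0))
  rw [eq_top_iff, ← TensorProduct.map₂_mk_top_top_eq_top, ← hspan, ← span_generators,
    Submodule.map₂_span_span, Submodule.span_le]
  rintro _ ⟨x, hx, _, ⟨y, hy, rfl⟩, rfl⟩
  exact sub_lie_lie_tmul_mem_cyclicChains hx hy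

lemma ceOneCycles_le_cyclicChains : ceOneCycles k (sl3 k) (sl3ModCenter k) ≤ cyclicChains k := by
  intro t ht
  have hlie : ⁅h k 0, ⁅h k 0, t⁆⁆ ∈ ceOneBoundaries k (sl3 k) (sl3ModCenter k) :=
    lie_mem_ceOneBoundaries _ (ceOneBoundaries_le_ceOneCycles _ _ _ (lie_mem_ceOneBoundaries _ ht))
  exact (Submodule.sub_mem_iff_left _ (Submodule.mem_sup_right hlie)).mp
    (sub_lie_lie_mem_cyclicChains t)

lemma proj_h_eq (i : Fin 3) : proj k (h k i) = proj k (h k 0) := by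
  rw [← sub_eq_zero, ← map_sub, proj_eq_zero_iff, LieModule.mem_maxTrivSubmodule]
  have had : LieModule.toEnd k (sl3 k) (sl3 k) (h k i - h k 0) = 0 := by
    refine LinearMap.ext_on span_generators ?_
    rintro _ ((⟨j, rfl⟩ | ⟨j, rfl⟩) | ⟨j, rfl⟩) <;> simp [lie_h_e, lie_h_f, lie_h_h]
  intro x
  rw [← lie_skew, ← LieModule.toEnd_apply_apply k, had, LinearMap.zero_apply, neg_zero]

lemma proj_h_zero_ne_zero : proj k (h k 0) ≠ 0 := by
  rw [ne_eq, proj_eq_zero_iff, LieModule.mem_maxTrivSubmodule]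
  intro hcenter
  have he : e k 0 = 0 := by
    rw [← hcenter (e k 0), ← lie_skew, lie_h_e, neg_neg]
  simpa [val_e] using congrArg (fun A : sl3 k => A.1 0 1) he

lemma toModuleHom_cyclicTensor (A : Matrix (Fin 3) (Fin 3) k) :
    LieModule.toModuleHom k (sl3 k) (sl3ModCenter k) (cyclicTensor k A) =
      A.trace • proj k (h k 0) := by
  have lie_e_proj_f (a b : Fin 3) :
      ⁅e k a, proj k (f k b)⁆ = if a = b then proj k (h k 0) else 0 := by
    rw [← LieModuleHom.map_lie]
    split_ifs with hab
    · rw [hab, ← proj_h_eq b, h]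
    · rw [lie_e_f_of_ne hab, map_zero]
  simp [cyclicTensor_apply, lie_e_proj_f, Matrix.trace, Finset.sum_smul]

lemma cyclicTensor_mem_ceOneCycles_iff {A : Matrix (Fin 3) (Fin 3) k} :
    cyclicTensor k A ∈ ceOneCycles k (sl3 k) (sl3ModCenter k) ↔ A.trace = 0 := by
  rw [ceOneCycles, LinearMap.mem_ker]
  exact (congrArg (· = 0) (toModuleHom_cyclicTensor A)).to_iff.trans
    (smul_eq_zero_iff_left proj_h_zero_ne_zero)

end CyclicTensor

section CyclicPairing

variable (k) in
/-- The bilinear pairing with entries `x_{a,a+1} y_{b+1,b} - x_{b+1,b} y_{a,a+1}`, a left inverse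
of `A ↦ ∑ A_{ab} e_a ⊗ f_b`. -/
def cyclicPairing : sl3 k →ₗ[k] sl3 k →ₗ[k] Matrix (Fin 3) (Fin 3) k :=
  LinearMap.mk₂ k
    (fun x y => Matrix.of fun a b =>
      x.1 a (a + 1) * y.1 (b + 1) b - x.1 (b + 1) b * y.1 a (a + 1))
    (fun x x' y => by ext; simp; ring) (fun c x y => by ext; simp; ring)
    (fun x y y' => by ext; simp; ring) (fun c x y => by ext; simp; ring)

lemma cyclicPairing_apply (x y : sl3 k) (a b : Fin 3) :
    cyclicPairing k x y a b = x.1 a (a + 1) * y.1 (b + 1) b - x.1 (b + 1) b * y.1 a (a + 1) := rfl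

lemma cyclicPairing_eq_zero_of_mem_center (x : sl3 k) {z : sl3 k} (hz : z ∈ center k (sl3 k)) :
    cyclicPairing k x z = 0 := by
  obtain ⟨c, hc⟩ := Submodule.mem_span_singleton.mp (mem_center_sl_iff.mp hz)
  ext a b
  have hsucc (i : Fin 3) : i ≠ i + 1 := (succ_ne_self i).symm
  simp [cyclicPairing_apply, ← hc, hsucc]

variable (k) in
/-- The linear map induced on tensors by the cyclic pairing. -/
def cyclicContraction : sl3 k ⊗[k] sl3ModCenter k →ₗ[k] Matrix (Fin 3) (Fin 3) k :=
  TensorProduct.lift <| LinearMap.flip <|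
    (center k (sl3 k)).toSubmodule.liftQ (cyclicPairing k).flip fun _ hz =>
      LinearMap.ext fun x => cyclicPairing_eq_zero_of_mem_center x hz

lemma cyclicContraction_tmul_proj (x y : sl3 k) :
    cyclicContraction k (x ⊗ₜ proj k y) = cyclicPairing k x y := rfl

lemma cyclicPairing_e_f (a b : Fin 3) :
    cyclicPairing k (e k a) (f k b) = Matrix.single a b 1 := by
  have hne {i j : Fin 3} (hij : i = j + 1) : i + 1 ≠ j := by decide +revert
  ext i j
  simp +contextual [cyclicPairing_apply, val_e, val_f, Matrix.single_apply, hne]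
  grind

lemma cyclicContraction_cyclicTensor (A : Matrix (Fin 3) (Fin 3) k) :
    cyclicContraction k (cyclicTensor k A) = A := by
  conv_rhs => rw [Matrix.matrix_eq_sum_single A]
  simp [cyclicTensor_apply, cyclicContraction_tmul_proj, cyclicPairing_e_f]

section CharThree

variable [CharP k 3]

/-- The three roots `ε_a - ε_{a+1}` agree on the traceless diagonal matrices. -/
lemma diag_sub_diag_succ (x : sl3 k) (a : Fin 3) :
    x.1 a a - x.1 (a + 1) (a + 1) = x.1 0 0 - x.1 1 1 := by
  have h3 : (3 : k) = 0 := CharP.ofNat_eq_zero k 3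
  have htr : x.1 0 0 + x.1 1 1 + x.1 2 2 = 0 := (Matrix.trace_fin_three x.1).symm.trans x.2
  fin_cases a
  · rfl
  · change x.1 1 1 - x.1 2 2 = _
    linear_combination x.1 1 1 * h3 - htr
  · change x.1 2 2 - x.1 0 0 = _
    linear_combination htr - x.1 0 0 * h3

lemma lie_apply_succ (x y : sl3 k) (a : Fin 3) :
    ⁅x, y⁆.1 a (a + 1) =
      (x.1 0 0 - x.1 1 1) * y.1 a (a + 1) - (y.1 0 0 - y.1 1 1) * x.1 a (a + 1) +
        (x.1 a (a + 2) * y.1 (a + 2) (a + 1) - y.1 a (a + 2) * x.1 (a + 2) (a + 1)) := by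
  rw [← diag_sub_diag_succ x a, ← diag_sub_diag_succ y a, SpecialLinear.sl_bracket]
  fin_cases a <;> simp [Matrix.mul_apply, Fin.sum_univ_three] <;> ring

lemma lie_succ_apply (x y : sl3 k) (b : Fin 3) :
    ⁅x, y⁆.1 (b + 1) b =
      (y.1 0 0 - y.1 1 1) * x.1 (b + 1) b - (x.1 0 0 - x.1 1 1) * y.1 (b + 1) b +
        (x.1 (b + 1) (b + 2) * y.1 (b + 2) b - y.1 (b + 1) (b + 2) * x.1 (b + 2) b) := by
  rw [← diag_sub_diag_succ x b, ← diag_sub_diag_succ y b, SpecialLinear.sl_bracket]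
  fin_cases b <;> simp [Matrix.mul_apply, Fin.sum_univ_three] <;> ring

lemma cyclicContraction_ceBoundary_proj (x y z : sl3 k) :
    cyclicContraction k (ceBoundary x y (proj k z)) =
      (Matrix.det (Matrix.of fun i a => (![x, y, z] i).1 a (a + 1)) +
        Matrix.det (Matrix.of fun i a => (![x, y, z] i).1 (a + 1) a)) • 1 := by
  rw [ceBoundary_proj, map_sub, map_sub, cyclicContraction_tmul_proj, cyclicContraction_tmul_proj,
    cyclicContraction_tmul_proj]
  ext a b
  simp only [Matrix.sub_apply, cyclicPairing_apply, lie_apply_succ, lie_succ_apply,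
    Matrix.det_fin_three]
  fin_cases a <;> fin_cases b <;> simp <;> ring

lemma cyclicContraction_mem_span_one {t : sl3 k ⊗[k] sl3ModCenter k}
    (ht : t ∈ ceOneBoundaries k (sl3 k) (sl3ModCenter k)) :
    cyclicContraction k t ∈ Submodule.span k {1} := by
  suffices ceOneBoundaries k (sl3 k) (sl3ModCenter k) ≤
      (Submodule.span k {1}).comap (cyclicContraction k) from this ht
  refine Submodule.span_le.mpr ?_
  rintro _ ⟨⟨x, y, m⟩, rfl⟩
  obtain ⟨z, rfl⟩ := proj_surjective m
  exact Submodule.mem_span_singleton.mpr ⟨_, (cyclicContraction_ceBoundary_proj x y z).symm⟩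

lemma cyclicTensor_mem_ceOneBoundaries_iff {A : Matrix (Fin 3) (Fin 3) k} :
    cyclicTensor k A ∈ ceOneBoundaries k (sl3 k) (sl3ModCenter k) ↔ A ∈ Submodule.span k {1} := by
  constructor
  · intro hA
    exact cyclicContraction_cyclicTensor A ▸ cyclicContraction_mem_span_one hA
  · intro hA
    obtain ⟨c, rfl⟩ := Submodule.mem_span_singleton.mp hA
    rw [map_smul]
    exact Submodule.smul_mem _ _ cyclicTensor_one_mem_ceOneBoundaries

end CharThree

end CyclicPairing

section Homology

variable (k) [CharP k 3]

/-- The homology class of the cycle `∑ A_{ab} e_a ⊗ f_b` attached to a traceless matrix `A`. -/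
def cyclicClass : sl3 k →ₗ[k] ceHomologyOne k (sl3 k) (sl3ModCenter k) :=
  Submodule.mkQ _ ∘ₗ
    (cyclicTensor k ∘ₗ (Matrix.traceLinearMap (Fin 3) k k).ker.subtype).codRestrict _
    fun A => cyclicTensor_mem_ceOneCycles_iff.mpr A.2

lemma ker_cyclicClass : (cyclicClass k).ker = (center k (sl3 k)).toSubmodule := by
  ext A
  rw [LieSubmodule.mem_toSubmodule, mem_center_sl_iff, ← cyclicTensor_mem_ceOneBoundaries_iff]
  exact Submodule.Quotient.mk_eq_zero _

lemma cyclicClass_surjective : Function.Surjective (cyclicClass k) := by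
  intro c
  obtain ⟨⟨t, ht⟩, rfl⟩ := Submodule.mkQ_surjective _ c
  obtain ⟨_, ⟨A, rfl⟩, b, hb, hAb⟩ := Submodule.mem_sup.mp (ceOneCycles_le_cyclicChains ht)
  have hA : cyclicTensor k A ∈ ceOneCycles k (sl3 k) (sl3ModCenter k) := by
    rw [eq_sub_of_add_eq hAb]
    exact sub_mem ht (ceOneBoundaries_le_ceOneCycles _ _ _ hb)
  refine ⟨⟨A, cyclicTensor_mem_ceOneCycles_iff.mp hA⟩, ?_⟩
  refine (Submodule.Quotient.eq _).mpr ?_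
  change cyclicTensor k A - t ∈ ceOneBoundaries k (sl3 k) (sl3ModCenter k)
  rw [← hAb, sub_add_cancel_left]
  exact neg_mem hb

/-- The first homology of `sl₃(k)` with coefficients in its quotient by the center is
isomorphic to that quotient. -/
noncomputable def homologyOneEquiv :
    sl3ModCenter k ≃ₗ[k] ceHomologyOne k (sl3 k) (sl3ModCenter k) :=
  (Submodule.quotEquivOfEq _ _ (ker_cyclicClass k).symm).trans
    ((cyclicClass k).quotKerEquivOfSurjective (cyclicClass_surjective k))

end Homology

section Finrank

variable (k)

lemma finrank_eq_eight : finrank k (sl3 k) = 8 := by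
  simpa using finrank_sl k (Fin 3)

lemma finrank_modCenter [CharP k 3] : finrank k (sl3ModCenter k) = 7 := by
  have hcenter : finrank k (center k (sl3 k)).toSubmodule = 1 :=
    finrank_center_sl (by simpa using CharP.ofNat_eq_zero k 3)
  have hsum := (center k (sl3 k)).toSubmodule.finrank_quotient_add_finrank
  rw [hcenter, finrank_eq_eight] at hsum
  exact Nat.succ_injective hsum

end Finrank

end sl3

theorem H7_quotient_module_dim_general (k : Type*) [Field k] [CharP k 3] :
    Module.finrank k (ceH k (sl3 k) (sl3ModCenter k) 7) = 7 := by
  have h2 : (2 : k) ≠ 0 := Ring.two_ne_zero (by simp [ringChar.eq k 3])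
  let basis : Module.Basis (Fin 8) k (sl3 k) :=
    Module.finBasisOfFinrankEq k (sl3 k) (sl3.finrank_eq_eight k)
  let duality : sl3ModCenter k ≃ₗ[k] ceH k (sl3 k) (sl3ModCenter k) 7 :=
    sl3.homologyOneEquiv k ≪≫ₗ ceHEquivHomologyOne sl3.trace_ad h2 basis
  rw [← duality.finrank_eq, sl3.finrank_modCenter]

theorem H7_quotient_module_dim (k : Type*) [Field k] [IsAlgClosed k] [CharP k 3] :
    Module.finrank k (ceH k (sl3 k) (sl3ModCenter k) 7) = 7 :=
  H7_quotient_module_dim_general k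
end

section
/- Let k be an algebraically closed field of characteristic 3 and let g = sl_3(k) be the Lie algebra of traceless 3×3 matrices over k. Then dim_k H^1(g, g) = 1; equivalently, the quotient of the space of derivations of g by the subspace of inner derivations (those of the form ad x for x ∈ g) is one-dimensional over k. -/
/-!
Let `n` have at least three elements. For `i ≠ j` write `E i j` for the elementary matrices, which
generate `sl n R`. Applying a derivation `D : sl n R → Matrix n n R` to the relations
`⁅E i j, E j k⁆ = E i k`, `⁅E i j, E k l⁆ = 0` and `⁅E k k - E j j, E i j⁆ = E i j` shows that
`D (E i j)` is supported on row `i` and column `j`, that its entries other than `(i, j)` are, up to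
sign, off-diagonal entries of one matrix `B`, and that the `(i, j)` entries have the form
`t j - t i`. With `t` as the diagonal of `B` this says `D = ⁅·, B⁆`.

So every derivation of `sl n R` is the commutator with some matrix `A`. It is inner exactly when
`A` differs from a traceless matrix by a scalar one, i.e. when `trace A` is a multiple of the
cardinality of `n`, and the trace identifies the outer derivations with `R ⧸ (card n)`. When
`card n` vanishes in a field, this is the field itself.
-/

lemma mem_range_inner_iff {R L M : Type*} [CommRing R] [LieRing L] [LieAlgebra R L]
    [AddCommGroup M] [Module R M] [LieRingModule L M] [LieModule R L M]
    (D : LieDerivation R L M) :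
    D ∈ LinearMap.range (LieDerivation.inner R L M) ↔ ∃ m : M, ∀ x, D x = ⁅x, m⁆ := by
  simp [LieDerivation.ext_iff, eq_comm]

lemma range_ad_eq_range_inner (R L : Type*) [CommRing R] [LieRing L] [LieAlgebra R L] :
    LinearMap.range (LieDerivation.ad R L).toLinearMap =
      LinearMap.range (LieDerivation.inner R L L) :=
  LinearMap.range_neg _

lemma exists_ne_ne_of_three_le_card {α : Type*} [Fintype α] (h : 3 ≤ Fintype.card α) (x y : α) :
    ∃ z, z ≠ x ∧ z ≠ y :=
  ENat.exists_ne_ne_of_three_le (by simpa using h) x y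

section Matrix

variable {n R : Type*} [NonUnitalNonAssocSemiring R] [Fintype n] [DecidableEq n]

lemma matrix_single_mul_apply (i j : n) (c : R) (M : Matrix n n R) (a b : n) :
    (Matrix.single i j c * M) a b = if a = i then c * M j b else 0 := by
  split_ifs with h
  · rw [h, Matrix.single_mul_apply_same]
  · exact Matrix.single_mul_apply_of_ne c i j a b h M

lemma matrix_mul_single_apply (i j : n) (c : R) (M : Matrix n n R) (a b : n) :
    (M * Matrix.single i j c) a b = if b = j then M a i * c else 0 := by
  split_ifs with h
  · rw [h, Matrix.mul_single_apply_same]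
  · exact Matrix.mul_single_apply_of_ne c i j a b h M

end Matrix

section DegreeOne

variable {k g M : Type*} [Field k] [LieRing g] [LieAlgebra k g]
variable [AddCommGroup M] [Module k M] [LieRingModule g M]

lemma ceD_ofSubsingleton (f : g →ₗ[k] M) (v : Fin 2 → g) :
    ceD k g M (AlternatingMap.ofSubsingleton k g M 0 f) v =
      -f ⁅v 0, v 1⁆ + (⁅v 0, f (v 1)⁆ - ⁅v 1, f (v 0)⁆) := by
  simp [ceD, Fin.sum_univ_succ, sub_eq_add_neg]

variable [LieModule k g M]

lemma ofSubsingleton_mem_ceZ_iff (f : g →ₗ[k] M) :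
    AlternatingMap.ofSubsingleton k g M 0 f ∈ ceZ k g M 1 ↔
      ∀ x y, f ⁅x, y⁆ = ⁅x, f y⁆ - ⁅y, f x⁆ := by
  refine ⟨fun h x y ↦ ?_, fun h v ↦ ?_⟩
  · exact neg_add_eq_zero.mp (by simpa [ceD_ofSubsingleton] using h ![x, y])
  · simp [ceD_ofSubsingleton, h]

lemma ofSubsingleton_mem_ceB_iff (f : g →ₗ[k] M) :
    AlternatingMap.ofSubsingleton k g M 0 f ∈ ceB k g M 1 ↔ ∃ m : M, ∀ x, f x = ⁅x, m⁆ := by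
  refine ⟨fun ⟨φ, hφ⟩ ↦ ⟨φ ![], fun x ↦ ?_⟩, fun ⟨m, hm⟩ ↦ ?_⟩
  · simpa [ceD] using hφ ![x]
  · exact ⟨AlternatingMap.constOfIsEmpty k g (Fin 0) m, fun v ↦ by simp [ceD, hm]⟩

variable (k g M)

/-- A derivation `g → M`, viewed as a Chevalley–Eilenberg `1`-cocycle. -/
def derivationEquivCocycle : LieDerivation k g M ≃ₗ[k] ceZ k g M 1 where
  toFun D := ⟨AlternatingMap.ofSubsingleton k g M 0 D,
    (ofSubsingleton_mem_ceZ_iff _).mpr D.apply_lie_eq_sub⟩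
  invFun ψ :=
    { (AlternatingMap.ofSubsingleton k g M (0 : Fin 1)).symm ψ.1 with
      leibniz' := (ofSubsingleton_mem_ceZ_iff _).mp <| by simp }
  map_add' _ _ := rfl
  map_smul' _ _ := rfl
  left_inv _ := rfl
  right_inv ψ := Subtype.ext <| Equiv.apply_symm_apply _ ψ.1

lemma map_derivationEquivCocycle_range_inner :
    (LinearMap.range (LieDerivation.inner k g M)).map (derivationEquivCocycle k g M).toLinearMap =
      (ceB k g M 1).comap (ceZ k g M 1).subtype := by
  ext ψ
  obtain ⟨D, rfl⟩ := (derivationEquivCocycle k g M).surjective ψ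
  rw [Submodule.mem_map_equiv, LinearEquiv.symm_apply_apply]
  exact (mem_range_inner_iff D).trans (ofSubsingleton_mem_ceB_iff D.toLinearMap).symm

/-- Derivations `g → M` modulo the inner ones `⁅·, m⁆` are the first cohomology of `g` in `M`. -/
def outerDerivationEquivCohomology :
    (LieDerivation k g M ⧸ LinearMap.range (LieDerivation.inner k g M)) ≃ₗ[k] ceH k g M 1 :=
  Submodule.Quotient.equiv _ _ _ (map_derivationEquivCocycle_range_inner k g M)

end DegreeOne

section SpecialLinear

open LieAlgebra.SpecialLinear

attribute [local instance] LieRing.ofAssociativeRing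

variable {n R : Type*} [CommRing R] [Fintype n] [DecidableEq n]

lemma lie_single_single {i j k : n} (hij : i ≠ j) (hjk : j ≠ k) (hik : i ≠ k) :
    ⁅single i j hij (1 : R), single j k hjk (1 : R)⁆ = single i k hik 1 := by
  ext : 1
  simp [LieRing.of_associative_ring_bracket, hik.symm]

lemma lie_single_single_of_ne {i j k l : n} (hij : i ≠ j) (hkl : k ≠ l) (hjk : j ≠ k)
    (hli : l ≠ i) : ⁅single i j hij (1 : R), single k l hkl (1 : R)⁆ = 0 := by
  ext : 1
  simp [LieRing.of_associative_ring_bracket, hjk, hli]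

lemma lie_single_single_symm {i j : n} (hij : i ≠ j) :
    ⁅single i j hij (1 : R), single j i hij.symm (1 : R)⁆ = singleSubSingle i j 1 := by
  ext : 1
  simp [LieRing.of_associative_ring_bracket]

lemma lie_singleSubSingle_single {i j k : n} (hij : i ≠ j) (hki : k ≠ i) (hkj : k ≠ j) :
    ⁅singleSubSingle k j (1 : R), single i j hij (1 : R)⁆ = single i j hij 1 := by
  ext : 1
  simp [LieRing.of_associative_ring_bracket, sub_mul, mul_sub, hij.symm, hki, hkj.symm]

lemma lieSpan_single_eq_top [Nonempty n] :
    LieSubalgebra.lieSpan R (sl n R) {x | ∃ (i j : n) (h : i ≠ j), single i j h 1 = x} = ⊤ := by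
  set S := LieSubalgebra.lieSpan R (sl n R) {x | ∃ (i j : n) (h : i ≠ j), single i j h 1 = x}
  have single_mem {i j : n} (h : i ≠ j) : single i j h 1 ∈ S :=
    LieSubalgebra.subset_lieSpan ⟨i, j, h, rfl⟩
  have singleSubSingle_mem (i j : n) : singleSubSingle i j 1 ∈ S := by
    obtain rfl | h := eq_or_ne i j
    · convert S.zero_mem
      ext : 1
      simp
    · rw [← lie_single_single_symm h]
      exact S.lie_mem (single_mem h) (single_mem h.symm)
  obtain ⟨o⟩ := ‹Nonempty n›
  refine eq_top_iff.mpr fun x _ ↦ ?_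
  have hx : x = ∑ i, ∑ j, (x : Matrix n n R) i j •
      if h : i = j then singleSubSingle i o 1 else single i j h 1 := by
    have val_apply (i j : n) :
        ((if h : i = j then singleSubSingle i o 1 else single i j h 1 : sl n R) : Matrix n n R) =
          Matrix.single i j 1 - if i = j then Matrix.single o o 1 else 0 := by
      split_ifs with h <;> simp [h]
    have trace_eq : ∑ i, (x : Matrix n n R) i i = 0 := x.2
    ext : 1
    simp only [AddSubmonoidClass.coe_finsetSum, SetLike.val_smul, val_apply, smul_sub, smul_ite,
      smul_zero, Finset.sum_sub_distrib, Finset.sum_ite_eq, Finset.mem_univ, if_true,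
      ← Finset.sum_smul, trace_eq, zero_smul, sub_zero]
    simp [← Matrix.matrix_eq_sum_single]
  rw [hx]
  refine sum_mem fun i _ ↦ sum_mem fun j _ ↦ S.smul_mem _ ?_
  split_ifs with h
  exacts [singleSubSingle_mem i o, single_mem h]

section Derivation

variable (D : LieDerivation R (sl n R) (Matrix n n R))

lemma derivation_lie_single_single_apply {i j k l : n} (hij : i ≠ j) (hkl : k ≠ l) (a b : n) :
    D ⁅single i j hij (1 : R), single k l hkl (1 : R)⁆ a b =
      (if a = i then D (single k l hkl 1) j b else 0)
        - (if b = j then D (single k l hkl 1) a i else 0)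
        - (if a = k then D (single i j hij 1) l b else 0)
        + (if b = l then D (single i j hij 1) a k else 0) := by
  simp only [LieDerivation.apply_lie_eq_sub, LieSubalgebra.coe_bracket_of_module, val_single,
    LieRing.of_associative_ring_bracket, Matrix.sub_apply, matrix_single_mul_apply,
    matrix_mul_single_apply, one_mul, mul_one]
  ring

lemma derivation_single_apply_diag {i j k : n} (hij : i ≠ j) (hki : k ≠ i) (hkj : k ≠ j) (a : n) :
    D (single i j hij 1) a a =
      (if a = j then D (singleSubSingle k j 1) a i else 0)
        - (if a = i then D (singleSubSingle k j 1) j a else 0) := by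
  conv_lhs => rw [← lie_singleSubSingle_single hij hki hkj]
  simp only [LieDerivation.apply_lie_eq_sub, LieSubalgebra.coe_bracket_of_module, val_single,
    val_singleSubSingle, LieRing.of_associative_ring_bracket, sub_mul, mul_sub, Matrix.sub_apply,
    matrix_single_mul_apply, matrix_mul_single_apply, one_mul, mul_one]
  grind

lemma derivation_single_apply_left_eq {i j k b : n} (hij : i ≠ j) (hkj : k ≠ j) (hbj : b ≠ j) :
    D (single i j hij 1) i b = D (single k j hkj 1) k b := by
  wlog hbk : b ≠ k generalizing i k
  · obtain rfl := not_not.mp hbk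
    obtain rfl | hbi := eq_or_ne b i
    · rfl
    · exact (this hkj hij hbi).symm
  obtain rfl | hik := eq_or_ne i k
  · rfl
  rw [← lie_single_single hik hkj hij, derivation_lie_single_single_apply]
  simp [hbj, hbk, hik]

lemma derivation_single_apply_self_add {i j k : n} (hij : i ≠ j) (hjk : j ≠ k) (hik : i ≠ k) :
    D (single i j hij 1) i j + D (single j k hjk 1) j k = D (single i k hik 1) i k := by
  rw [← lie_single_single hij hjk hik, derivation_lie_single_single_apply]
  simp [hij, hjk.symm, add_comm]

variable (hn : 3 ≤ Fintype.card n)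

include hn

lemma derivation_single_apply_eq_zero {i j a b : n} (hij : i ≠ j) (hai : a ≠ i) (hbj : b ≠ j) :
    D (single i j hij 1) a b = 0 := by
  obtain rfl | hab := eq_or_ne a b
  · obtain ⟨k, hki, hkj⟩ := exists_ne_ne_of_three_le_card hn i j
    simp [derivation_single_apply_diag D hij hki hkj, hai, hbj]
  obtain rfl | haj := eq_or_ne a j
  · obtain ⟨k, hki, hka⟩ := exists_ne_ne_of_three_le_card hn i a
    have bracket_apply := derivation_lie_single_single_apply D hij hka k b
    simpa [lie_single_single_of_ne hij hka hka.symm hai, hki, hbj] using bracket_apply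
  · have bracket_apply := derivation_lie_single_single_apply D hij hab.symm a a
    simpa [lie_single_single_of_ne hij hab.symm hbj.symm hai, hai, haj, hab]
      using bracket_apply.symm

lemma derivation_single_apply_right_eq_neg {i j k a : n} (hij : i ≠ j) (hka : k ≠ a)
    (hai : a ≠ i) : D (single i j hij 1) a j = -D (single k a hka 1) k i := by
  obtain rfl | haj := eq_or_ne a j
  · obtain ⟨l, hli, hla⟩ := exists_ne_ne_of_three_le_card hn i a
    rw [derivation_single_apply_left_eq D hka hij hij,
      derivation_single_apply_diag D hij hli hla, derivation_single_apply_diag D hij hli hla]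
    simp [hij, hij.symm]
  · have bracket_apply := derivation_lie_single_single_apply D hij haj.symm j j
    rw [lie_single_single hij haj.symm hai.symm,
      derivation_single_apply_eq_zero D hn _ hij.symm haj.symm] at bracket_apply
    rw [derivation_single_apply_left_eq D hka haj.symm hai.symm]
    simp only [hij.symm, haj.symm, ↓reduceIte, zero_sub, add_zero] at bracket_apply
    linear_combination bracket_apply

lemma derivation_single_apply_self_add_symm {i j : n} (hij : i ≠ j) :
    D (single i j hij 1) i j + D (single j i hij.symm 1) j i = 0 := by
  obtain ⟨k, hki, hkj⟩ := exists_ne_ne_of_three_le_card hn i j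
  linear_combination derivation_single_apply_self_add D hij hkj.symm hki.symm +
    derivation_single_apply_self_add D hij.symm hki.symm hkj.symm

lemma exists_derivation_single_apply_self_eq_sub :
    ∃ t : n → R, ∀ (i j : n) (hij : i ≠ j), D (single i j hij 1) i j = t j - t i := by
  have : Nonempty n := Fintype.card_pos_iff.mp (by lia)
  let o : n := Classical.arbitrary n
  refine ⟨fun i ↦ if h : o = i then 0 else D (single o i h 1) o i, fun i j hij ↦ ?_⟩
  obtain rfl | hi := eq_or_ne o i
  · simp [hij]
  obtain rfl | hj := eq_or_ne o j
  · simpa [hi] using eq_neg_of_add_eq_zero_left (derivation_single_apply_self_add_symm D hn hij)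
  · simpa [hi, hj] using eq_sub_of_add_eq' (derivation_single_apply_self_add D hi hij hj)

lemma exists_derivation_single_apply_eq :
    ∃ B : Matrix n n R, ∀ (i j : n) (hij : i ≠ j),
      D (single i j hij 1) = ⁅Matrix.single i j (1 : R), B⁆ := by
  have : Nontrivial n := Fintype.one_lt_card_iff_nontrivial.mp (by lia)
  choose next next_ne using fun j : n ↦ exists_ne j
  obtain ⟨t, ht⟩ := exists_derivation_single_apply_self_eq_sub D hn
  refine ⟨Matrix.of fun j b ↦ if b = j then t j else D (single (next j) j (next_ne j) 1) (next j) b,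
    fun i j hij ↦ Matrix.ext fun a b ↦ ?_⟩
  simp only [LieRing.of_associative_ring_bracket, Matrix.sub_apply, matrix_single_mul_apply,
    matrix_mul_single_apply, one_mul, mul_one, Matrix.of_apply]
  obtain rfl | hai := eq_or_ne a i <;> obtain rfl | hbj := eq_or_ne b j
  · simpa using ht a b hij
  · simpa [hbj] using derivation_single_apply_left_eq D hij (next_ne j) hbj
  · simpa [hai, hai.symm] using derivation_single_apply_right_eq_neg D hn hij (next_ne a) hai
  · simpa [hai, hbj] using derivation_single_apply_eq_zero D hn hij hai hbj

lemma inner_sl_matrix_surjective :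
    Function.Surjective (LieDerivation.inner R (sl n R) (Matrix n n R)) := by
  intro D
  have : Nonempty n := Fintype.card_pos_iff.mp (by lia)
  obtain ⟨B, hB⟩ := exists_derivation_single_apply_eq D hn
  refine ⟨B, LieDerivation.ext_of_lieSpan_eq_top _ lieSpan_single_eq_top ?_⟩
  rintro _ ⟨i, j, hij, rfl⟩
  simp [hB]

end Derivation

variable (n R) in
/-- The derivation `⁅A, ·⁆` of `sl n R` given by a matrix `A`, not necessarily traceless. -/
def slAd : Matrix n n R →ₗ[R] LieDerivation R (sl n R) (sl n R) where
  toFun A :=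
    { toLinearMap := ((LieAlgebra.ad R (Matrix n n R) A).comp (sl n R).subtype).codRestrict
        (sl n R).toSubmodule fun x ↦ LieAlgebra.matrix_trace_commutator_zero n R A x
      leibniz' x y := Subtype.ext <| by
        change ⁅A, ⁅(x : Matrix n n R), (y : Matrix n n R)⁆⁆ =
          ⁅(x : Matrix n n R), ⁅A, (y : Matrix n n R)⁆⁆ - ⁅(y : Matrix n n R), ⁅A, x.1⁆⁆
        rw [leibniz_lie, ← lie_skew, sub_eq_neg_add] }
  map_add' A B := by ext x : 2; exact add_lie A B x.1
  map_smul' c A := by ext x : 2; exact smul_lie c A x.1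

@[simp]
lemma coe_slAd_apply (A : Matrix n n R) (x : sl n R) :
    (slAd n R A x : Matrix n n R) = ⁅A, (x : Matrix n n R)⁆ :=
  rfl

lemma slAd_surjective (hn : 3 ≤ Fintype.card n) : Function.Surjective (slAd n R) := by
  intro D
  let D' : LieDerivation R (sl n R) (Matrix n n R) :=
    { toLinearMap := (sl n R).subtype.comp D.toLinearMap
      leibniz' x y := by simp [D.apply_lie_eq_sub] }
  obtain ⟨B, hB⟩ := inner_sl_matrix_surjective hn D'
  refine ⟨-B, LieDerivation.ext fun x ↦ Subtype.ext ?_⟩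
  have lie_B : ⁅(x : Matrix n n R), B⁆ = D x := LieDerivation.congr_fun hB x
  simpa using lie_B

lemma slAd_eq_zero_iff (A : Matrix n n R) : slAd n R A = 0 ↔ A ∈ Set.range (Matrix.scalar n) := by
  refine ⟨fun h ↦ Matrix.mem_range_scalar_of_commute_single fun i j hij ↦ ?_, ?_⟩
  · have lie_single : ⁅A, Matrix.single i j (1 : R)⁆ = 0 := by
      simpa using congr(($h (single i j hij 1) : Matrix n n R))
    exact (commute_iff_lie_eq.mpr lie_single).symm
  · rintro ⟨c, rfl⟩
    ext : 2
    simpa using (Matrix.scalar_commute c (Commute.all c) _).lie_eq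

lemma slAd_mem_range_ad_iff (A : Matrix n n R) :
    slAd n R A ∈ LinearMap.range (LieDerivation.ad R (sl n R)).toLinearMap ↔
      (Fintype.card n : R) ∣ A.trace := by
  have slAd_coe (x : sl n R) : slAd n R x = LieDerivation.ad R (sl n R) x := by ext : 2; simp
  have trace_scalar (c : R) : (Matrix.scalar n c).trace = Fintype.card n * c := by simp
  constructor
  · rintro ⟨x, hx⟩
    obtain ⟨c, hc⟩ := (slAd_eq_zero_iff (A - (x : Matrix n n R))).mp <| by
      rw [map_sub, slAd_coe, sub_eq_zero]
      exact hx.symm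
    have trace_x : Matrix.trace (x : Matrix n n R) = 0 := x.2
    exact ⟨c, by rw [← trace_scalar, hc, Matrix.trace_sub, trace_x, sub_zero]⟩
  · rintro ⟨c, hc⟩
    have trace_sub : (A - Matrix.scalar n c).trace = 0 := by
      rw [Matrix.trace_sub, trace_scalar, hc, sub_self]
    refine ⟨⟨A - Matrix.scalar n c, trace_sub⟩, (slAd_coe _).symm.trans ?_⟩
    rw [map_sub, (slAd_eq_zero_iff _).mpr ⟨c, rfl⟩, sub_zero]

lemma ker_mkQ_comp_slAd :
    LinearMap.ker ((LinearMap.range (LieDerivation.ad R (sl n R)).toLinearMap).mkQ ∘ₗ slAd n R) =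
      LinearMap.ker ((Ideal.span {(Fintype.card n : R)}).mkQ ∘ₗ Matrix.traceLinearMap n R R) := by
  ext A
  simp only [LinearMap.mem_ker, LinearMap.comp_apply, Submodule.mkQ_apply,
    Submodule.Quotient.mk_eq_zero, Ideal.mem_span_singleton]
  exact slAd_mem_range_ad_iff A

/-- The trace of `A`, modulo the cardinality of `n`, classifies the derivation `slAd n R A` of
`sl n R` up to inner derivations. -/
noncomputable def slOuterDerivationEquiv (hn : 3 ≤ Fintype.card n) :
    (LieDerivation R (sl n R) (sl n R) ⧸
        LinearMap.range (LieDerivation.ad R (sl n R)).toLinearMap) ≃ₗ[R]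
      R ⧸ Ideal.span {(Fintype.card n : R)} :=
  have : Nonempty n := Fintype.card_pos_iff.mp (by lia)
  (LinearMap.quotKerEquivOfSurjective (Submodule.mkQ _ ∘ₗ slAd n R)
      ((Submodule.mkQ_surjective _).comp (slAd_surjective hn))).symm ≪≫ₗ
    Submodule.quotEquivOfEq _ _ ker_mkQ_comp_slAd ≪≫ₗ
    LinearMap.quotKerEquivOfSurjective (Submodule.mkQ _ ∘ₗ Matrix.traceLinearMap n R R)
      ((Submodule.mkQ_surjective _).comp Matrix.trace_surjective)

lemma finrank_outerDerivation_sl {k : Type*} [Field k] (hn : 3 ≤ Fintype.card n)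
    (h : (Fintype.card n : k) = 0) :
    Module.finrank k (LieDerivation k (sl n k) (sl n k) ⧸
      LinearMap.range (LieDerivation.ad k (sl n k)).toLinearMap) = 1 := by
  have span_eq_bot : Ideal.span {(Fintype.card n : k)} = ⊥ := by simp [h]
  rw [(slOuterDerivationEquiv hn).finrank_eq,
    (Submodule.quotEquivOfEqBot _ span_eq_bot).finrank_eq, Module.finrank_self]

end SpecialLinear

open LieAlgebra.SpecialLinear (sl) in
theorem H1_adjoint_dim_outer_derivations_general (k n : Type*) [Field k] [Fintype n]
    [DecidableEq n] (hn : 3 ≤ Fintype.card n) (h : (Fintype.card n : k) = 0) :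
    Module.finrank k (ceH k (sl n k) (sl n k) 1) = 1 ∧
      Module.finrank k
        (LieDerivation k (sl n k) (sl n k) ⧸
          LinearMap.range (LieDerivation.ad k (sl n k)).toLinearMap) = 1 := by
  refine ⟨?_, finrank_outerDerivation_sl hn h⟩
  rw [← (outerDerivationEquivCohomology k _ _).finrank_eq, ← range_ad_eq_range_inner,
    finrank_outerDerivation_sl hn h]

theorem H1_adjoint_dim_outer_derivations (k : Type*) [Field k] [IsAlgClosed k] [CharP k 3] :
    Module.finrank k (ceH k (sl3 k) (sl3 k) 1) = 1 ∧
      Module.finrank k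
        (LieDerivation k (sl3 k) (sl3 k) ⧸
          LinearMap.range (LieDerivation.ad k (sl3 k)).toLinearMap) = 1 :=
  H1_adjoint_dim_outer_derivations_general k (Fin 3) (by simp)
    (by simpa using CharP.cast_eq_zero k 3)
end
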